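/- arXiv:2002.01181 — 15 statements merged into one kernel-verified Lean document; each statement's English description precedes it below -/
import Mathlib

section
/- Let λ ≥ 1 and let a₋, b₋ be real numbers with |b₋| < a₋. Set c₋ = (5/3)·a₋ − (2/3)·√(4·a₋² − 3·b₋²). Then −(a₋ + b₋/λ) < b₋ + c₋/λ < a₋ + b₋/λ. -/
/-- Lemma (Hilfssatz) 4.1 a): for `λ ≥ 1` and `|b₋| < a₋`, with
`c₋ = (5/3)a₋ − (2/3)√(4a₋² − 3b₋²)`, one has
`−(a₋ + b₋/λ) < b₋ + c₋/λ < a₋ + b₋/λ`. -/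
theorem stmt_0 (lam am bm cm : ℝ) (hlam : 1 ≤ lam) (hab : |bm| < am)
    (hcm : cm = 5 / 3 * am - 2 / 3 * Real.sqrt (4 * am ^ 2 - 3 * bm ^ 2)) :
    -(am + bm / lam) < bm + cm / lam ∧ bm + cm / lam < am + bm / lam := by
  obtain ⟨h1, h2⟩ := abs_lt.mp hab
  have hs1 : am < Real.sqrt (4 * am ^ 2 - 3 * bm ^ 2) := by
    apply Real.lt_sqrt_of_sq_lt
    nlinarith
  have hs2 : Real.sqrt (4 * am ^ 2 - 3 * bm ^ 2) < 4 * am + 3 * bm := by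
    rw [Real.sqrt_lt' (by linarith)]
    have : 0 < (am + bm) ^ 2 := pow_pos (by linarith) 2
    nlinarith
  have hl : 0 < lam := by linarith
  have hA : 0 < am + 2 * bm + cm := by linarith
  have hB : 0 < am - cm := by linarith
  have ht : 0 < lam⁻¹ := inv_pos.mpr hl
  have ht1 : lam⁻¹ ≤ 1 := inv_le_one_of_one_le₀ hlam
  simp only [div_eq_mul_inv] at *
  generalize lam⁻¹ = t at *
  have e1 := mul_pos ht hA
  have e2 := mul_pos ht hB
  have e3 := mul_nonneg (sub_nonneg.mpr ht1) (by linarith : 0 ≤ am + bm)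
  have e4 := mul_nonneg (sub_nonneg.mpr ht1) (by linarith : 0 ≤ am - bm)
  clear hcm hs1 hs2
  constructor <;> nlinarith
end

section
/- Let λ ≥ 1 and let a₊, b₊ be real numbers with |b₊| < a₊. Set c₊ = (5/3)·a₊ − (2/3)·√(4·a₊² − 3·b₊²). Then −(a₊ − b₊/λ) < b₊ − c₊/λ < a₊ − b₊/λ. -/
/-- Lemma (Hilfssatz) 4.1 b): for `λ ≥ 1` and `|b₊| < a₊`, with
`c₊ = (5/3)a₊ − (2/3)√(4a₊² − 3b₊²)`, one has
`−(a₊ − b₊/λ) < b₊ − c₊/λ < a₊ − b₊/λ`. -/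
theorem stmt_1 (lam ap bp cp : ℝ) (hlam : 1 ≤ lam) (hab : |bp| < ap)
    (hcp : cp = 5 / 3 * ap - 2 / 3 * Real.sqrt (4 * ap ^ 2 - 3 * bp ^ 2)) :
    -(ap - bp / lam) < bp - cp / lam ∧ bp - cp / lam < ap - bp / lam := by
  obtain ⟨h1, h2⟩ := abs_lt.mp hab
  have hs1 : ap < Real.sqrt (4 * ap ^ 2 - 3 * bp ^ 2) := by
    apply Real.lt_sqrt_of_sq_lt
    nlinarith
  have hs2 : Real.sqrt (4 * ap ^ 2 - 3 * bp ^ 2) < 4 * ap - 3 * bp := by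
    rw [Real.sqrt_lt' (by linarith)]
    nlinarith [mul_pos (sub_pos.mpr h2) (sub_pos.mpr h2)]
  have hl : 0 < lam := by linarith
  have ht : 0 < lam⁻¹ := inv_pos.mpr hl
  have ht1 : 0 ≤ 1 - lam⁻¹ := sub_nonneg.mpr (inv_le_one_of_one_le₀ hlam)
  have e1 : 0 < ap - cp := by linarith
  have e2 : 0 < ap - 2 * bp + cp := by linarith
  have k1 : 0 < lam⁻¹ * (ap - cp) := mul_pos ht e1
  have k2 : 0 < lam⁻¹ * (ap - 2 * bp + cp) := mul_pos ht e2
  have k3 : 0 ≤ (1 - lam⁻¹) * (ap + bp) := mul_nonneg ht1 (by linarith)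
  have k4 : 0 ≤ (1 - lam⁻¹) * (ap - bp) := mul_nonneg ht1 (by linarith)
  simp only [div_eq_mul_inv bp lam, div_eq_mul_inv cp lam]
  constructor <;> linarith
end

section
/- Let a > 0, let 0 < η ≤ 1/3, and let ξ be a real number with −a(1+η) < ξ < a(1−η). Then 4a²(1+3η²) − 3ξ² > 0, and |(ξ + η·√(4a²(1+3η²) − 3ξ²)) / (1+3η²)| < a. -/
/-- Lemma (Hilfssatz) 4.2: for `a > 0`, `0 < η ≤ 1/3` and `−a(1+η) < ξ < a(1−η)`,
one has `4a²(1+3η²) − 3ξ² > 0` and `|(ξ + η√(4a²(1+3η²) − 3ξ²))/(1+3η²)| < a`. -/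
theorem stmt_2 (a η ξ : ℝ) (ha : 0 < a) (hη : 0 < η) (hη' : η ≤ 1 / 3)
    (hξ₁ : -(a * (1 + η)) < ξ) (hξ₂ : ξ < a * (1 - η)) :
    0 < 4 * a ^ 2 * (1 + 3 * η ^ 2) - 3 * ξ ^ 2 ∧
    |(ξ + η * Real.sqrt (4 * a ^ 2 * (1 + 3 * η ^ 2) - 3 * ξ ^ 2)) / (1 + 3 * η ^ 2)| < a := by
  have hae : 0 < a * η := mul_pos ha hη
  have hpos : 0 < 4 * a ^ 2 * (1 + 3 * η ^ 2) - 3 * ξ ^ 2 := by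
    have h1 : 0 < (a * (1 + η) - ξ) * (a * (1 + η) + ξ) :=
      mul_pos (by linarith) (by linarith)
    nlinarith [sq_nonneg (a * (1 - 3 * η))]
  refine ⟨hpos, ?_⟩
  have hS := Real.sqrt_nonneg (4 * a ^ 2 * (1 + 3 * η ^ 2) - 3 * ξ ^ 2)
  have hS2 := Real.sq_sqrt hpos.le
  set S := Real.sqrt (4 * a ^ 2 * (1 + 3 * η ^ 2) - 3 * ξ ^ 2) with hSdef
  have hD : 0 < 1 + 3 * η ^ 2 := by positivity
  have hae2 : 0 < a * η ^ 2 := by positivity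
  have hsq : (η * S) ^ 2 = η ^ 2 * (4 * a ^ 2 * (1 + 3 * η ^ 2) - 3 * ξ ^ 2) := by
    rw [mul_pow, hS2]
  rw [abs_lt, lt_div_iff₀ hD, div_lt_iff₀ hD]
  constructor
  · by_cases h : 0 < a * (1 + 3 * η ^ 2) + ξ
    · have := mul_nonneg hη.le hS
      linarith
    · have h2 : 0 < (1 + 3 * η ^ 2) * ((a + a * η + ξ) * (a * η - a - ξ)) :=
        mul_pos hD (mul_pos (by linarith) (by linarith))
      have h3 : -(a * (1 + 3 * η ^ 2) + ξ) < η * S := by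
        apply lt_of_pow_lt_pow_left₀ 2 (mul_nonneg hη.le hS)
        rw [hsq]
        linarith
      linarith
  · have h2 : 0 < (1 + 3 * η ^ 2) * ((a + a * η - ξ) * (a - a * η - ξ)) :=
      mul_pos hD (mul_pos (by linarith) (by linarith))
    have h3 : η * S < a * (1 + 3 * η ^ 2) - ξ := by
      apply lt_of_pow_lt_pow_left₀ 2 (by linarith)
      rw [hsq]
      linarith
    linarith
end

section
/- Let a > 0 and 0 < η ≤ 1/3. Then the function B(ξ) = ξ + η·√(4a²(1+3η²) − 3ξ²) is strictly monotonically increasing on the open interval (−a(1+η), a(1−η)). -/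
/-- The function `B(ξ) = ξ + η√(4a²(1+3η²) − 3ξ²)` is strictly monotonically
increasing on the open interval `(−a(1+η), a(1−η))`, for `a > 0` and `0 < η ≤ 1/3`. -/
theorem stmt_4 (a η : ℝ) (ha : 0 < a) (hη : 0 < η) (hη' : η ≤ 1 / 3) :
    StrictMonoOn (fun ξ : ℝ => ξ + η * Real.sqrt (4 * a ^ 2 * (1 + 3 * η ^ 2) - 3 * ξ ^ 2))
      (Set.Ioo (-(a * (1 + η))) (a * (1 - η))) := by
  intro x hx y hy hxy
  obtain ⟨hx1, hx2⟩ := hx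
  obtain ⟨hy1, hy2⟩ := hy
  show x + η * _ < y + η * _
  by_cases hs : x + y ≤ 0
  · have h : Real.sqrt (4 * a ^ 2 * (1 + 3 * η ^ 2) - 3 * x ^ 2)
        ≤ Real.sqrt (4 * a ^ 2 * (1 + 3 * η ^ 2) - 3 * y ^ 2) := by
      apply Real.sqrt_le_sqrt
      nlinarith [mul_nonneg (sub_nonneg.2 hxy.le) (neg_nonneg.2 hs)]
    have := mul_le_mul_of_nonneg_left h hη.le
    linarith
  · have hs' : 0 < x + y := not_le.1 hs
    have key : ∀ z : ℝ, -(a * (1 - η)) < z → z < a * (1 - η) →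
        (a * (1 + 3 * η)) ^ 2 ≤ 4 * a ^ 2 * (1 + 3 * η ^ 2) - 3 * z ^ 2 := by
      intro z h1 h2
      have := sq_lt_sq' h1 h2
      nlinarith
    have kx := key x (by linarith) hx2
    have ky := key y (by linarith) hy2
    have hp : 0 ≤ a * (1 + 3 * η) := by positivity
    have qx := Real.sq_sqrt ((sq_nonneg _).trans kx)
    have qy := Real.sq_sqrt ((sq_nonneg _).trans ky)
    have lx := Real.le_sqrt_of_sq_le kx
    have ly := Real.le_sqrt_of_sq_le ky
    set s := Real.sqrt (4 * a ^ 2 * (1 + 3 * η ^ 2) - 3 * x ^ 2)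
    set t := Real.sqrt (4 * a ^ 2 * (1 + 3 * η ^ 2) - 3 * y ^ 2)
    have hlt : 3 * η * (x + y) < s + t := by
      have h1 : 3 * η * (x + y) < 3 * η * (2 * (a * (1 - η))) :=
        mul_lt_mul_of_pos_left (by linarith) (by positivity)
      have h2 : 0 < a * η ^ 2 := by positivity
      nlinarith
    have hst : 0 < s + t := lt_trans (by positivity) hlt
    have e : (η * (s - t)) * (s + t) = (y - x) * (3 * η * (x + y)) := by
      linear_combination η * qx - η * qy
    have h3 : (η * (s - t)) * (s + t) < (y - x) * (s + t) := by
      rw [e]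
      exact mul_lt_mul_of_pos_left hlt (sub_pos.2 hxy)
    have := lt_of_mul_lt_mul_right h3 hst.le
    linarith
end

section
/- Let x̄ ≥ 0, Δx > 0, λ ≥ 1 be real numbers, and let a₋, b₋, a₊, b₊ be real numbers with |b₋| < a₋ and |b₊| < a₊. Set c₋ = c(a₋,b₋), c₊ = c(a₊,b₊), q = 2·x̄·Δx / (x̄² + (Δx)²/3), a' = (1/2)(a₋ + b₋/λ)(1 − q/2) + (1/2)(a₊ − b₊/λ)(1 + q/2), η = q/(6λ), ξ = (1/2)(b₋ + c₋/λ)(1 − q/2) + (1/2)(b₊ − c₊/λ)(1 + q/2) − a'·q/(6λ), and b' = (ξ + η·√(4·a'²·(1+3η²) − 3ξ²)) / (1+3η²). Then |b'| < a'. -/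
lemma aux_c (a b : ℝ) (h : |b| < a) (c : ℝ)
    (hc : c = 5 / 3 * a - 2 / 3 * Real.sqrt (4 * a ^ 2 - 3 * b ^ 2)) :
    c < a ∧ 0 < a + 2 * b + c ∧ 0 < a - 2 * b + c := by
  obtain ⟨h1, h2⟩ := abs_lt.mp h
  have hlt : a < Real.sqrt (4 * a ^ 2 - 3 * b ^ 2) := by
    apply Real.lt_sqrt_of_sq_lt
    nlinarith
  have hp : Real.sqrt (4 * a ^ 2 - 3 * b ^ 2) < 4 * a + 3 * b := by
    rw [Real.sqrt_lt' (by linarith)]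
    nlinarith [mul_pos (show 0 < a + b by linarith) (show 0 < a + b by linarith)]
  have hm : Real.sqrt (4 * a ^ 2 - 3 * b ^ 2) < 4 * a - 3 * b := by
    rw [Real.sqrt_lt' (by linarith)]
    nlinarith [mul_pos (show 0 < a - b by linarith) (show 0 < a - b by linarith)]
  refine ⟨by linarith, by linarith, by linarith⟩

lemma aux_flux (a b c l : ℝ) (h : |b| < a) (hl0 : 0 < l) (hl1 : l ≤ 1)
    (h1 : c < a) (h2 : 0 < a + 2 * b + c) :
    0 < (a + b * l) - (b + c * l) ∧ 0 < (a + b * l) + (b + c * l) := by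
  obtain ⟨h3, h4⟩ := abs_lt.mp h
  constructor
  · nlinarith [mul_nonneg (sub_nonneg.2 hl1) (show 0 ≤ a - b by linarith),
      mul_pos hl0 (sub_pos.2 h1)]
  · nlinarith [mul_nonneg (sub_nonneg.2 hl1) (show 0 ≤ a + b by linarith), mul_pos hl0 h2]

lemma aux_final (a η ξ : ℝ) (hη : 0 ≤ η) (h1 : ξ < a - η * a) (h2 : -a - η * a < ξ) :
    |(ξ + η * Real.sqrt (4 * a ^ 2 * (1 + 3 * η ^ 2) - 3 * ξ ^ 2)) / (1 + 3 * η ^ 2)| < a := by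
  have ha : 0 < a := by linarith
  have hηa : 0 ≤ η * a := by positivity
  have hK : 0 < 1 + 3 * η ^ 2 := by positivity
  have hD : 0 ≤ 4 * a ^ 2 * (1 + 3 * η ^ 2) - 3 * ξ ^ 2 := by
    have : ξ ^ 2 ≤ (a + η * a) ^ 2 := sq_le_sq' (by linarith) (by linarith)
    nlinarith [sq_nonneg (a * (3 * η - 1))]
  have hS := Real.sq_sqrt hD
  have hS0 := Real.sqrt_nonneg (4 * a ^ 2 * (1 + 3 * η ^ 2) - 3 * ξ ^ 2)
  set S := Real.sqrt (4 * a ^ 2 * (1 + 3 * η ^ 2) - 3 * ξ ^ 2)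
  have hηS : 0 ≤ η * S := by positivity
  have hηS2 : (η * S) ^ 2 = η ^ 2 * (4 * a ^ 2 * (1 + 3 * η ^ 2) - 3 * ξ ^ 2) := by
    rw [mul_pow, hS]
  have hη2a : 0 ≤ η ^ 2 * a := by positivity
  rw [abs_lt, lt_div_iff₀ hK, div_lt_iff₀ hK]
  constructor
  · by_contra hcon
    push Not at hcon
    have h3 : (η * S) ^ 2 ≤ (-(ξ + a * (1 + 3 * η ^ 2))) ^ 2 :=
      pow_le_pow_left₀ hηS (by linarith) 2
    have h4 : (-(ξ + a)) ^ 2 < (η * a) ^ 2 :=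
      pow_lt_pow_left₀ (by linarith) (by nlinarith) (by norm_num)
    have h5 := mul_pos hK (sub_pos.2 h4)
    nlinarith
  · have h4 : (η * a) ^ 2 < (a - ξ) ^ 2 :=
      pow_lt_pow_left₀ (by linarith) hηa (by norm_num)
    have h5 := mul_pos hK (sub_pos.2 h4)
    have h3 : (η * S) ^ 2 < (a * (1 + 3 * η ^ 2) - ξ) ^ 2 := by nlinarith
    have := lt_of_pow_lt_pow_left₀ 2 (by nlinarith) h3
    linarith


/-- Theorem 4.3: stability of the scheme update `Euler`. Given `x̄ ≥ 0`, `Δx > 0`,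
`λ ≥ 1` and states with `|b₋| < a₋`, `|b₊| < a₊`, the updated state `(a',b')` of the
staggered-grid scheme satisfies `|b'| < a'`. -/
theorem stmt_5 (xbar Δx lam am bm ap bp cm cp q a' η ξ b' : ℝ)
    (hxbar : 0 ≤ xbar) (hΔx : 0 < Δx) (hlam : 1 ≤ lam)
    (hm : |bm| < am) (hp : |bp| < ap)
    (hcm : cm = 5 / 3 * am - 2 / 3 * Real.sqrt (4 * am ^ 2 - 3 * bm ^ 2))
    (hcp : cp = 5 / 3 * ap - 2 / 3 * Real.sqrt (4 * ap ^ 2 - 3 * bp ^ 2))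
    (hq : q = 2 * xbar * Δx / (xbar ^ 2 + Δx ^ 2 / 3))
    (ha' : a' = 1 / 2 * (am + bm / lam) * (1 - q / 2) + 1 / 2 * (ap - bp / lam) * (1 + q / 2))
    (hη : η = q / (6 * lam))
    (hξ : ξ = 1 / 2 * (bm + cm / lam) * (1 - q / 2) + 1 / 2 * (bp - cp / lam) * (1 + q / 2)
      - a' * q / (6 * lam))
    (hb' : b' = (ξ + η * Real.sqrt (4 * a' ^ 2 * (1 + 3 * η ^ 2) - 3 * ξ ^ 2)) / (1 + 3 * η ^ 2)) :
    |b'| < a' := by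
  have hden : 0 < xbar ^ 2 + Δx ^ 2 / 3 := by positivity
  have hq0 : 0 ≤ q := by rw [hq]; positivity
  have hq2 : q < 2 := by
    rw [hq, div_lt_iff₀ hden]
    nlinarith [sq_nonneg (2 * xbar - Δx), mul_pos hΔx hΔx]
  have hl : 0 < lam := by linarith
  have hl0 : 0 < lam⁻¹ := by positivity
  have hl1 : lam⁻¹ ≤ 1 := inv_le_one_of_one_le₀ hlam
  obtain ⟨m1, m2, -⟩ := aux_c am bm hm cm hcm
  obtain ⟨p1, -, p2⟩ := aux_c ap bp hp cp hcp
  obtain ⟨m3, m4⟩ := aux_flux am bm cm lam⁻¹ hm hl0 hl1 m1 m2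
  obtain ⟨p3, p4⟩ := aux_flux ap (-bp) cp lam⁻¹ (by rwa [abs_neg]) hl0 hl1 p1 (by linarith)
  have hηa : a' * q / (6 * lam) = η * a' := by rw [hη]; ring
  have hη0 : 0 ≤ η := by rw [hη]; positivity
  have hqm : 0 < 1 - q / 2 := by linarith
  have hqp : 0 < 1 + q / 2 := by linarith
  rw [hηa] at hξ
  rw [hb']
  simp only [div_eq_mul_inv bm, div_eq_mul_inv bp, div_eq_mul_inv cm, div_eq_mul_inv cp] at ha' hξ
  apply aux_final a' η ξ hη0
  · have e1 := mul_pos m3 hqm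
    have e2 := mul_pos p4 hqp
    linarith
  · have e1 := mul_pos m4 hqm
    have e2 := mul_pos p3 hqp
    linarith
end

section
/- Let a > 0, x̄ ≥ 0, Δx > 0 and λ ≥ 1. Then the scheme update preserves the constant rest state: Euler(a, 0, a, 0, x̄, Δx, λ) = (a, 0), i.e. with a₋ = a₊ = a and b₋ = b₊ = 0 one obtains a' = a and b' = 0. -/
/-- The scheme update preserves the constant rest state: with `a₋ = a₊ = a > 0` and
`b₋ = b₊ = 0` one obtains `a' = a` and `b' = 0`, i.e.
`Euler(a, 0, a, 0, x̄, Δx, λ) = (a, 0)`. -/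
theorem stmt_7 (a xbar Δx lam : ℝ) (ha : 0 < a)
    (hxbar : 0 ≤ xbar) (hΔx : 0 < Δx) (hlam : 1 ≤ lam)
    (am bm ap bp cm cp q a' η ξ b' : ℝ)
    (ham : am = a) (hbm : bm = 0) (hap : ap = a) (hbp : bp = 0)
    (hcm : cm = 5 / 3 * am - 2 / 3 * Real.sqrt (4 * am ^ 2 - 3 * bm ^ 2))
    (hcp : cp = 5 / 3 * ap - 2 / 3 * Real.sqrt (4 * ap ^ 2 - 3 * bp ^ 2))
    (hq : q = 2 * xbar * Δx / (xbar ^ 2 + Δx ^ 2 / 3))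
    (ha' : a' = 1 / 2 * (am + bm / lam) * (1 - q / 2) + 1 / 2 * (ap - bp / lam) * (1 + q / 2))
    (hη : η = q / (6 * lam))
    (hξ : ξ = 1 / 2 * (bm + cm / lam) * (1 - q / 2) + 1 / 2 * (bp - cp / lam) * (1 + q / 2)
      - a' * q / (6 * lam))
    (hb' : b' = (ξ + η * Real.sqrt (4 * a' ^ 2 * (1 + 3 * η ^ 2) - 3 * ξ ^ 2)) / (1 + 3 * η ^ 2)) :
    a' = a ∧ b' = 0 := by
  subst am bm a bp
  have h1 : Real.sqrt (4 * ap ^ 2 - 3 * (0:ℝ) ^ 2) = 2 * ap := by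
    rw [show 4 * ap ^ 2 - 3 * (0:ℝ) ^ 2 = (2 * ap) ^ 2 by ring]
    exact Real.sqrt_sq (by linarith)
  rw [h1] at hcm hcp
  have hA : a' = ap := by rw [ha']; ring
  have hX : ξ = -2 * ap * η := by
    have hl : lam ≠ 0 := by linarith
    rw [hξ, hη, hA, hcm, hcp]; field_simp; ring
  refine ⟨hA, ?_⟩
  have h2 : Real.sqrt (4 * a' ^ 2 * (1 + 3 * η ^ 2) - 3 * ξ ^ 2) = 2 * ap := by
    rw [hX, hA, show 4 * ap ^ 2 * (1 + 3 * η ^ 2) - 3 * (-2 * ap * η) ^ 2 = (2 * ap) ^ 2 by ring]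
    exact Real.sqrt_sq (by linarith)
  rw [hb', h2, hX, show -2 * ap * η + η * (2 * ap) = 0 by ring, zero_div]
end

section
/- Let a₀, b₀ : ℝ → ℝ be C¹ functions with a₀ even and b₀ odd, let A₀(x) = ∫₀ˣ u·a₀(u) du and B₀(x) = ∫₀ˣ b₀(u) du, and let a(t,x), b(t,x) be given by the explicit solution formulas of the linearized radially symmetric system. Then for every T > 0 and X > 0, the functions (t,x) ↦ x·a(t,x) and (t,x) ↦ x·b(t,x) are bounded on (0,T) × (0,X). -/
/-- A continuous function is bounded on a symmetric compact interval. -/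
lemma aux_bdd (f : ℝ → ℝ) (hf : Continuous f) (R : ℝ) :
    ∃ K, ∀ u, |u| ≤ R → |f u| ≤ K := by
  obtain ⟨K, hK⟩ := (isCompact_Icc (a := -R) (b := R)).exists_bound_of_continuousOn
    hf.continuousOn
  exact ⟨K, fun u hu => hK u (abs_le.mp hu)⟩

/-- The primitive of an odd function is even, hence the difference quotient bound. -/
lemma aux_diff (f F : ℝ → ℝ) (hf : Continuous f) (hodd : ∀ x, f (-x) = -f x)
    (hF : ∀ x, F x = ∫ u in (0 : ℝ)..x, f u) (R K x r : ℝ) (hK : ∀ u, |u| ≤ R → |f u| ≤ K)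
    (hx : 0 < x) (hr : 0 < r) (hR : x + r ≤ R) :
    |(F (x + r) - F (x - r)) / x| ≤ 2 * K := by
  have hev : F (x - r) = F (r - x) := by
    have h := intervalIntegral.integral_comp_neg (a := 0) (b := r - x) f
    simp only [hodd, intervalIntegral.integral_neg, neg_zero, neg_sub] at h
    rw [hF, hF, intervalIntegral.integral_symm, ← h, neg_neg]
  have hd : F (x + r) - F (r - x) = ∫ u in (r - x)..(x + r), f u := by
    rw [hF, hF]
    exact intervalIntegral.integral_interval_sub_left (hf.intervalIntegrable _ _)
      (hf.intervalIntegrable _ _)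
  have hb := intervalIntegral.norm_integral_le_of_norm_le_const (a := r - x) (b := x + r)
    (f := f) (C := K) (by
      intro u hu
      rw [Set.uIoc_of_le (by linarith)] at hu
      exact hK u (abs_le.mpr ⟨by linarith [hu.1], by linarith [hu.2]⟩))
  rw [hev, hd, abs_div, abs_of_pos hx, div_le_iff₀ hx]
  rw [Real.norm_eq_abs, show x + r - (r - x) = 2 * x by ring,
    abs_of_pos (by linarith : 0 < 2 * x)] at hb
  linarith

/-- For even/odd `C¹` data `a₀, b₀`, the explicit solution `a, b` of the linearized
radially symmetric system has the property that `x·a(t,x)` and `x·b(t,x)` are bounded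
on every bounded box `(0,T) × (0,X)` of the quarter plane. -/
theorem stmt_8 (a₀ b₀ : ℝ → ℝ) (ha₀ : ContDiff ℝ 1 a₀) (hb₀ : ContDiff ℝ 1 b₀)
    (heven : ∀ x, a₀ (-x) = a₀ x) (hodd : ∀ x, b₀ (-x) = -b₀ x)
    (A₀ B₀ : ℝ → ℝ)
    (hA₀ : ∀ x, A₀ x = ∫ u in (0 : ℝ)..x, u * a₀ u)
    (hB₀ : ∀ x, B₀ x = ∫ u in (0 : ℝ)..x, b₀ u)
    (a b : ℝ → ℝ → ℝ)
    (ha : ∀ t x, a t x =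
      1 / (2 * x) * ((x + t / Real.sqrt 3) * a₀ (x + t / Real.sqrt 3)
        + (x - t / Real.sqrt 3) * a₀ (x - t / Real.sqrt 3))
      - Real.sqrt 3 / (2 * x) * ((x + t / Real.sqrt 3) * b₀ (x + t / Real.sqrt 3)
        + B₀ (x + t / Real.sqrt 3))
      + Real.sqrt 3 / (2 * x) * ((x - t / Real.sqrt 3) * b₀ (x - t / Real.sqrt 3)
        + B₀ (x - t / Real.sqrt 3)))
    (hb : ∀ t x, b t x =
      -(1 / (2 * Real.sqrt 3 * x)) * ((x + t / Real.sqrt 3) * a₀ (x + t / Real.sqrt 3)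
        - A₀ (x + t / Real.sqrt 3) / x)
      + 1 / (2 * Real.sqrt 3 * x) * ((x - t / Real.sqrt 3) * a₀ (x - t / Real.sqrt 3)
        - A₀ (x - t / Real.sqrt 3) / x)
      + 1 / (2 * x) * ((x + t / Real.sqrt 3) * b₀ (x + t / Real.sqrt 3)
        - t / (Real.sqrt 3 * x) * B₀ (x + t / Real.sqrt 3))
      + 1 / (2 * x) * ((x - t / Real.sqrt 3) * b₀ (x - t / Real.sqrt 3)
        + t / (Real.sqrt 3 * x) * B₀ (x - t / Real.sqrt 3))) :
    ∀ T > (0 : ℝ), ∀ X > (0 : ℝ), ∃ M : ℝ,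
      ∀ t ∈ Set.Ioo (0 : ℝ) T, ∀ x ∈ Set.Ioo (0 : ℝ) X,
        |x * a t x| ≤ M ∧ |x * b t x| ≤ M := by
  intro T hT X hX
  have hca := ha₀.continuous
  have hcb := hb₀.continuous
  have hcp : Continuous fun u => u * a₀ u := by fun_prop
  have hcq : Continuous fun u => u * b₀ u := by fun_prop
  have hcB : Continuous B₀ := by
    rw [show B₀ = fun x => ∫ u in (0 : ℝ)..x, b₀ u from funext hB₀]
    exact intervalIntegral.continuous_primitive (fun _ _ => hcb.intervalIntegrable _ _) 0
  obtain ⟨K1, h1⟩ := aux_bdd _ hcp (X + T)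
  obtain ⟨K2, h2⟩ := aux_bdd _ hcq (X + T)
  obtain ⟨K3, h3⟩ := aux_bdd _ hcB (X + T)
  obtain ⟨K4, h4⟩ := aux_bdd _ hcb (X + T)
  have p0 : |(0 : ℝ)| ≤ X + T := by rw [abs_zero]; linarith
  have k1 := (abs_nonneg _).trans (h1 0 p0)
  have k2 := (abs_nonneg _).trans (h2 0 p0)
  have k3 := (abs_nonneg _).trans (h3 0 p0)
  have k4 := (abs_nonneg _).trans (h4 0 p0)
  refine ⟨2 * K1 + 2 * K2 + 2 * K3 + T * K4, fun t ht x hx => ?_⟩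
  obtain ⟨ht0, htT⟩ := ht
  obtain ⟨hx0, hxX⟩ := hx
  have hs1 : 1 ≤ Real.sqrt 3 := Real.one_le_sqrt.mpr (by norm_num)
  have hs2 : Real.sqrt 3 ≤ 2 := Real.sqrt_le_iff.mpr (by norm_num)
  have hbe := hb t x
  have hae := ha t x
  rw [show t / (Real.sqrt 3 * x) = t / Real.sqrt 3 / x by rw [div_div]] at hbe
  have hr0 : 0 < t / Real.sqrt 3 := by positivity
  have hrT : t / Real.sqrt 3 ≤ T := (div_le_self ht0.le hs1).trans htT.le
  generalize t / Real.sqrt 3 = r at *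
  generalize Real.sqrt 3 = s at *
  have hp : |x + r| ≤ X + T := abs_le.mpr ⟨by linarith, by linarith⟩
  have hm : |x - r| ≤ X + T := abs_le.mpr ⟨by linarith, by linarith⟩
  have dA := aux_diff _ A₀ hcp (fun u => by rw [heven]; ring) hA₀ (X + T) K1 x r h1 hx0 hr0
    (by linarith)
  have dB := aux_diff _ B₀ hcb hodd hB₀ (X + T) K4 x r h4 hx0 hr0 (by linarith)
  have p1 := h1 _ hp
  have m1 := h1 _ hm
  have p2 := h2 _ hp
  have m2 := h2 _ hm
  have p3 := h3 _ hp
  have m3 := h3 _ hm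
  have hs0 : 0 < s := by linarith
  have ea : x * a t x = ((x + r) * a₀ (x + r) + (x - r) * a₀ (x - r)) / 2
      + s / 2 * ((x - r) * b₀ (x - r) + B₀ (x - r) - (x + r) * b₀ (x + r) - B₀ (x + r)) := by
    rw [hae]; field_simp; ring
  have eb : x * b t x = 1 / (2 * s) * ((x - r) * a₀ (x - r) - (x + r) * a₀ (x + r)
        + (A₀ (x + r) - A₀ (x - r)) / x)
      + ((x + r) * b₀ (x + r) + (x - r) * b₀ (x - r)) / 2
      - r / 2 * ((B₀ (x + r) - B₀ (x - r)) / x) := by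
    rw [hbe]; field_simp; ring
  rw [ea, eb]
  generalize (x + r) * a₀ (x + r) = P at *
  generalize (x - r) * a₀ (x - r) = Pm at *
  generalize (x + r) * b₀ (x + r) = Q at *
  generalize (x - r) * b₀ (x - r) = Qm at *
  generalize (A₀ (x + r) - A₀ (x - r)) / x = D at *
  generalize (B₀ (x + r) - B₀ (x - r)) / x = E at *
  generalize B₀ (x + r) = B at *
  generalize B₀ (x - r) = Bm at *
  clear ea eb hae hbe
  rw [abs_le] at p1 m1 p2 m2 p3 m3 dA
  have u1 : |s / 2 * (Qm + Bm - Q - B)| ≤ 1 * (2 * K2 + 2 * K3) := by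
    rw [abs_mul]
    apply mul_le_mul _ _ (abs_nonneg _) zero_le_one
    · rw [abs_of_pos (by linarith)]; linarith
    · rw [abs_le]; constructor <;> linarith
  have u2 : |1 / (2 * s) * (Pm - P + D)| ≤ 1 / 2 * (4 * K1) := by
    rw [abs_mul]
    apply mul_le_mul _ _ (abs_nonneg _) (by norm_num)
    · rw [abs_of_pos (by positivity)]
      exact one_div_le_one_div_of_le (by norm_num) (by linarith)
    · rw [abs_le]; constructor <;> linarith
  have u3 : |r / 2 * E| ≤ T / 2 * (2 * K4) := by
    rw [abs_mul]
    apply mul_le_mul _ dB (abs_nonneg _) (by linarith)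
    rw [abs_of_pos (by linarith)]; linarith
  have hTK : 0 ≤ T * K4 := by positivity
  rw [abs_le] at u1 u2 u3
  constructor <;> rw [abs_le] <;> constructor <;> linarith
end

section
/- The map Θ(p,u) = (p·(3+4u²), 4·p·u·√(1+u²)) is a bijection from the state space S = {(p,u) ∈ ℝ² : p > 0} onto S̃ = {(a,b) ∈ ℝ² : |b| < a}, with inverse given by p = (√(4a² − 3b²) − a)/3 and u = b/√(4·p·(p + a)). -/
theorem inv_aux (p u : ℝ) (hp : 0 < p) :
      (Real.sqrt (4 * (p * (3 + 4 * u ^ 2)) ^ 2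
          - 3 * (4 * p * u * Real.sqrt (1 + u ^ 2)) ^ 2) - p * (3 + 4 * u ^ 2)) / 3 = p ∧
      (4 * p * u * Real.sqrt (1 + u ^ 2))
        / Real.sqrt (4 * p * (p + p * (3 + 4 * u ^ 2))) = u := by
  have h1 : (0:ℝ) < 1 + u ^ 2 := by positivity
  have hs : Real.sqrt (1 + u ^ 2) ^ 2 = 1 + u ^ 2 := Real.sq_sqrt h1.le
  have hs0 : 0 < Real.sqrt (1 + u ^ 2) := Real.sqrt_pos.mpr h1
  generalize Real.sqrt (1 + u ^ 2) = s at hs hs0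
  constructor
  · have e : 4 * (p * (3 + 4 * u ^ 2)) ^ 2 - 3 * (4 * p * u * s) ^ 2
        = (p * (6 + 4 * u ^ 2)) ^ 2 := by
      linear_combination (-48 * p ^ 2 * u ^ 2) * hs
    rw [e, Real.sqrt_sq (by positivity)]
    ring
  · have e : 4 * p * (p + p * (3 + 4 * u ^ 2)) = (4 * p * s) ^ 2 := by
      linear_combination (-16 * p ^ 2) * hs
    rw [e, Real.sqrt_sq (by positivity)]
    field_simp

/-- The transformation `Θ(p,u) = (p(3+4u²), 4pu√(1+u²))` is a bijection from the state
space `S = {(p,u) : p > 0}` onto `S̃ = {(a,b) : |b| < a}`, with inverse given by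
`p = (√(4a² − 3b²) − a)/3` and `u = b/√(4p(p+a))`. -/
theorem stmt_11 :
    Set.BijOn
      (fun pu : ℝ × ℝ => (pu.1 * (3 + 4 * pu.2 ^ 2), 4 * pu.1 * pu.2 * Real.sqrt (1 + pu.2 ^ 2)))
      {pu : ℝ × ℝ | 0 < pu.1} {ab : ℝ × ℝ | |ab.2| < ab.1} ∧
    ∀ p u : ℝ, 0 < p →
      (Real.sqrt (4 * (p * (3 + 4 * u ^ 2)) ^ 2
          - 3 * (4 * p * u * Real.sqrt (1 + u ^ 2)) ^ 2) - p * (3 + 4 * u ^ 2)) / 3 = p ∧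
      (4 * p * u * Real.sqrt (1 + u ^ 2))
        / Real.sqrt (4 * p * (p + p * (3 + 4 * u ^ 2))) = u := by
  refine ⟨⟨?_, ?_, ?_⟩, fun p u hp => inv_aux p u hp⟩
  · rintro ⟨p, u⟩ hp
    simp only [Set.mem_setOf_eq] at hp ⊢
    have hs : Real.sqrt (1 + u ^ 2) ^ 2 = 1 + u ^ 2 := Real.sq_sqrt (by positivity)
    apply abs_lt_of_sq_lt_sq _ (by positivity)
    have e : (p * (3 + 4 * u ^ 2)) ^ 2 - (4 * p * u * Real.sqrt (1 + u ^ 2)) ^ 2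
        = p ^ 2 * (9 + 8 * u ^ 2) := by
      linear_combination (-16 * p ^ 2 * u ^ 2) * hs
    have : 0 < p ^ 2 * (9 + 8 * u ^ 2) := by positivity
    linarith
  · rintro ⟨p, u⟩ hp ⟨p', u'⟩ hp' h
    simp only [Set.mem_setOf_eq] at hp hp'
    simp only [Prod.mk.injEq] at h
    obtain ⟨ha, hb⟩ := h
    obtain ⟨h1, h2⟩ := inv_aux p u hp
    obtain ⟨h3, h4⟩ := inv_aux p' u' hp'
    rw [ha, hb] at h1 h2
    have hpp : p = p' := h1.symm.trans h3
    have huu : u = u' := by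
      rw [← h4, ← h2]
      simp only [hpp]
    rw [hpp, huu]
  · rintro ⟨a, b⟩ hab
    simp only [Set.mem_setOf_eq] at hab
    have ha : 0 < a := (abs_nonneg b).trans_lt hab
    have hb2 : b ^ 2 < a ^ 2 := sq_lt_sq.mpr (by rwa [abs_of_pos ha])
    have hD : Real.sqrt (4 * a ^ 2 - 3 * b ^ 2) ^ 2 = 4 * a ^ 2 - 3 * b ^ 2 :=
      Real.sq_sqrt (by nlinarith)
    have hDa : a < Real.sqrt (4 * a ^ 2 - 3 * b ^ 2) :=
      Real.lt_sqrt_of_sq_lt (by nlinarith)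
    obtain ⟨p, hpD⟩ : ∃ p, Real.sqrt (4 * a ^ 2 - 3 * b ^ 2) = 3 * p + a :=
      ⟨(Real.sqrt (4 * a ^ 2 - 3 * b ^ 2) - a) / 3, by ring⟩
    rw [hpD] at hD hDa
    have hp : 0 < p := by linarith
    have hq0 : 0 < 4 * p * (p + a) := by positivity
    have hq : Real.sqrt (4 * p * (p + a)) ^ 2 = 4 * p * (p + a) := Real.sq_sqrt hq0.le
    have hqp : 0 < Real.sqrt (4 * p * (p + a)) := Real.sqrt_pos.mpr hq0
    generalize Real.sqrt (4 * p * (p + a)) = q at hq hqp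
    have hu : (b / q) ^ 2 = b ^ 2 / (4 * p * (p + a)) := by rw [div_pow, hq]
    have hs : Real.sqrt (1 + (b / q) ^ 2) = (p + a) / q := by
      rw [show 1 + (b / q) ^ 2 = ((p + a) / q) ^ 2 by
        field_simp
        linear_combination hq + hD / 3]
      exact Real.sqrt_sq (by positivity)
    refine ⟨(p, b / q), hp, ?_⟩
    simp only [Prod.mk.injEq]
    constructor
    · rw [hu]
      field_simp
      linear_combination hD / 3
    · rw [hs]
      field_simp
      linear_combination (-b) * hq
end

section
/- Let p > 0 and u ∈ ℝ, set a = p·(3+4u²), b = 4·p·u·√(1+u²), and c = (5/3)·a − (2/3)·√(4a² − 3b²). Then p^{3/4}·√(1+u²) = 2^{−7/4}·(3a − c)^{1/2}·(a − c)^{1/4}, and consequently p^{3/4}·|u| ≤ p^{3/4}·√(1+u²) ≤ (a/3)^{3/4}. -/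
/-- With `(a,b) = Θ(p,u)` and `c = c(a,b)`, the entropy density satisfies
`p^{3/4}√(1+u²) = 2^{−7/4}(3a − c)^{1/2}(a − c)^{1/4}`, and consequently
`p^{3/4}|u| ≤ p^{3/4}√(1+u²) ≤ (a/3)^{3/4}`. -/
theorem stmt_12 (p u a b c : ℝ) (hp : 0 < p)
    (ha : a = p * (3 + 4 * u ^ 2))
    (hb : b = 4 * p * u * Real.sqrt (1 + u ^ 2))
    (hc : c = 5 / 3 * a - 2 / 3 * Real.sqrt (4 * a ^ 2 - 3 * b ^ 2)) :
    p ^ ((3 : ℝ) / 4) * Real.sqrt (1 + u ^ 2)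
      = 2 ^ (-(7 : ℝ) / 4) * (3 * a - c) ^ ((1 : ℝ) / 2) * (a - c) ^ ((1 : ℝ) / 4) ∧
    p ^ ((3 : ℝ) / 4) * |u| ≤ p ^ ((3 : ℝ) / 4) * Real.sqrt (1 + u ^ 2) ∧
    p ^ ((3 : ℝ) / 4) * Real.sqrt (1 + u ^ 2) ≤ (a / 3) ^ ((3 : ℝ) / 4) := by
  have hw : (0:ℝ) < 1 + u ^ 2 := by positivity
  have hs : Real.sqrt (1 + u ^ 2) ^ 2 = 1 + u ^ 2 := Real.sq_sqrt hw.le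
  have hD : 4 * a ^ 2 - 3 * b ^ 2 = (p * (6 + 4 * u ^ 2)) ^ 2 := by
    rw [ha, hb, mul_pow _ (Real.sqrt _), hs]; ring
  have hpos : 0 ≤ p * (6 + 4 * u ^ 2) := by positivity
  rw [hD, Real.sqrt_sq hpos] at hc
  have h1 : 3 * a - c = 2 ^ (3:ℝ) * p * (1 + u ^ 2) := by
    rw [hc, ha]; norm_num; ring
  have h2 : a - c = 2 * p := by
    rw [hc, ha]; ring
  refine ⟨?_, ?_, ?_⟩
  · rw [h1, h2, Real.mul_rpow (by positivity) hw.le, Real.mul_rpow (by positivity) hp.le,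
      Real.mul_rpow (by norm_num) hp.le, ← Real.rpow_mul (by norm_num), Real.sqrt_eq_rpow]
    have e1 : (2:ℝ) ^ (-(7 : ℝ) / 4) * 2 ^ ((3:ℝ) * (1 / 2)) * 2 ^ ((1:ℝ) / 4) = 1 := by
      rw [← Real.rpow_add (by norm_num), ← Real.rpow_add (by norm_num)]
      norm_num
    have e2 : p ^ ((3:ℝ) / 4) = p ^ ((1:ℝ) / 2) * p ^ ((1:ℝ) / 4) := by
      rw [← Real.rpow_add hp]; norm_num
    rw [e2]
    linear_combination (-(p ^ ((1:ℝ) / 2) * p ^ ((1:ℝ) / 4) * (1 + u ^ 2) ^ ((1:ℝ) / 2))) * e1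
  · refine mul_le_mul_of_nonneg_left ?_ (by positivity)
    exact Real.abs_le_sqrt (by linarith)
  · have ha3 : a / 3 = p * (1 + 4 / 3 * u ^ 2) := by rw [ha]; ring
    have hv : (0:ℝ) ≤ 1 + 4 / 3 * u ^ 2 := by positivity
    rw [ha3, Real.mul_rpow hp.le hv]
    refine mul_le_mul_of_nonneg_left ?_ (by positivity)
    have f1 : Real.sqrt (1 + u ^ 2) = ((1 + u ^ 2) ^ (2:ℝ)) ^ ((1:ℝ) / 4) := by
      rw [← Real.rpow_mul hw.le, Real.sqrt_eq_rpow]; norm_num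
    have f2 : (1 + 4 / 3 * u ^ 2) ^ ((3:ℝ) / 4) = ((1 + 4 / 3 * u ^ 2) ^ (3:ℝ)) ^ ((1:ℝ) / 4) := by
      rw [← Real.rpow_mul hv]; norm_num
    rw [f1, f2]
    refine Real.rpow_le_rpow (by positivity) ?_ (by norm_num)
    rw [show (2:ℝ) = ((2:ℕ):ℝ) by norm_num, show (3:ℝ) = ((3:ℕ):ℝ) by norm_num,
      Real.rpow_natCast, Real.rpow_natCast]
    push_cast
    have g2 : 0 ≤ u ^ 2 := by positivity
    have g4 : 0 ≤ u ^ 4 := by positivity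
    have g6 : 0 ≤ u ^ 6 := by positivity
    nlinarith
end

section
/- Let F₀ : ℝ → ℝ be a C² function and f₀ = F₀'. Define, for t > 0 and x > 0, a₊(t,x) = f₀(x + t/√3)/x and b₊(t,x) = −f₀(x + t/√3)/(√3·x) + F₀(x + t/√3)/(√3·x²). Then a₊, b₊ satisfy the linearized system: ∂/∂t (x²·a₊(t,x)) + ∂/∂x (x²·b₊(t,x)) = 0 and ∂/∂t (x²·b₊(t,x)) + ∂/∂x ((x²/3)·a₊(t,x)) = (2x/3)·a₊(t,x) for all t > 0, x > 0; moreover a₊(t,x) → f₀(x)/x and b₊(t,x) → −f₀(x)/(√3·x) + F₀(x)/(√3·x²) as t ↓ 0 for each x > 0. -/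
open Filter

/-- The outgoing-wave ansatz `a₊(t,x) = f₀(x + t/√3)/x`,
`b₊(t,x) = −f₀(x + t/√3)/(√3 x) + F₀(x + t/√3)/(√3 x²)` with `f₀ = F₀'` and `F₀ ∈ C²`
solves the linearized radially symmetric system and attains the stated initial values
as `t ↓ 0`. -/
theorem stmt_13 (F₀ f₀ : ℝ → ℝ) (hF₀ : ContDiff ℝ 2 F₀) (hf₀ : f₀ = deriv F₀)
    (aP bP : ℝ → ℝ → ℝ)
    (haP : ∀ t x, aP t x = f₀ (x + t / Real.sqrt 3) / x)
    (hbP : ∀ t x, bP t x = -f₀ (x + t / Real.sqrt 3) / (Real.sqrt 3 * x)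
      + F₀ (x + t / Real.sqrt 3) / (Real.sqrt 3 * x ^ 2)) :
    (∀ t > (0 : ℝ), ∀ x > (0 : ℝ),
      deriv (fun s => x ^ 2 * aP s x) t + deriv (fun y => y ^ 2 * bP t y) x = 0 ∧
      deriv (fun s => x ^ 2 * bP s x) t + deriv (fun y => y ^ 2 / 3 * aP t y) x
        = 2 * x / 3 * aP t x) ∧
    (∀ x > (0 : ℝ),
      Tendsto (fun t => aP t x) (nhdsWithin 0 (Set.Ioi 0)) (nhds (f₀ x / x)) ∧
      Tendsto (fun t => bP t x) (nhdsWithin 0 (Set.Ioi 0))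
        (nhds (-f₀ x / (Real.sqrt 3 * x) + F₀ x / (Real.sqrt 3 * x ^ 2)))) := by
  have hf : ContDiff ℝ 1 f₀ := by
    rw [hf₀]
    exact ((contDiff_succ_iff_deriv (n := 1)).1 hF₀).2.2
  have hFd : ∀ z, HasDerivAt F₀ (f₀ z) z := fun z => by
    rw [hf₀]
    exact (hF₀.differentiable (by norm_num) z).hasDerivAt
  have hfd : ∀ z, HasDerivAt f₀ (deriv f₀ z) z := fun z =>
    (hf.differentiable (by norm_num) z).hasDerivAt
  have h3 : Real.sqrt 3 ≠ 0 := by positivity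
  have hsq : Real.sqrt 3 ^ 2 = 3 := Real.sq_sqrt (by norm_num)
  refine ⟨fun t _ x hx => ?_, fun x hx => ?_⟩
  · have hx0 : x ≠ 0 := hx.ne'
    have hev : ∀ᶠ y in nhds x, y ≠ 0 := isOpen_ne.mem_nhds hx0
    have ht : HasDerivAt (fun s : ℝ => x + s / Real.sqrt 3) (1 / Real.sqrt 3) t :=
      ((hasDerivAt_id t).div_const _).const_add x
    have hy : HasDerivAt (fun y : ℝ => y + t / Real.sqrt 3) 1 x :=
      (hasDerivAt_id x).add_const _
    have fT := (hfd (x + t / Real.sqrt 3)).comp t ht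
    have FT := (hFd (x + t / Real.sqrt 3)).comp t ht
    have fX := (hfd (x + t / Real.sqrt 3)).comp x hy
    have FX := (hFd (x + t / Real.sqrt 3)).comp x hy
    have d1 := (fT.const_mul x).congr_of_eventuallyEq
      (f₁ := fun s => x ^ 2 * aP s x) (Eventually.of_forall fun s => by
        simp only [haP, Function.comp]; field_simp)
    have d2 := ((FX.sub ((hasDerivAt_id x).mul fX)).div_const (Real.sqrt 3)).congr_of_eventuallyEq
      (f₁ := fun y => y ^ 2 * bP t y) (hev.mono fun y hy0 => by
        simp only [hbP, Function.comp, Pi.sub_apply, Pi.mul_apply, id]; field_simp; ring)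
    have d3 := ((FT.sub (fT.const_mul x)).div_const (Real.sqrt 3)).congr_of_eventuallyEq
      (f₁ := fun s => x ^ 2 * bP s x) (Eventually.of_forall fun s => by
        simp only [hbP, Function.comp, Pi.sub_apply]; field_simp; ring)
    have d4 := (((hasDerivAt_id x).mul fX).div_const 3).congr_of_eventuallyEq
      (f₁ := fun y => y ^ 2 / 3 * aP t y) (hev.mono fun y hy0 => by
        simp only [haP, Function.comp, Pi.mul_apply, id]; field_simp)
    rw [d1.deriv, d2.deriv, d3.deriv, d4.deriv, haP]
    simp only [Function.comp, id]
    constructor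
    · field_simp
      ring
    · field_simp
      rw [hsq]
      ring
  · have hc : Continuous f₀ := hf.continuous
    have hC : Continuous F₀ := hF₀.continuous
    constructor
    · have : Continuous (fun t => aP t x) := by
        simp only [haP]; fun_prop
      have h := this.tendsto 0
      simp only [haP 0, zero_div, add_zero] at h
      exact h.mono_left nhdsWithin_le_nhds
    · have : Continuous (fun t => bP t x) := by
        simp only [hbP]; fun_prop
      have h := this.tendsto 0
      simp only [hbP 0, zero_div, add_zero] at h
      exact h.mono_left nhdsWithin_le_nhds
end

section
/- Let F₀ : ℝ → ℝ be a C² function and f₀ = F₀'. Define, for t > 0 and x > 0, a₋(t,x) = f₀(x − t/√3)/x and b₋(t,x) = f₀(x − t/√3)/(√3·x) − F₀(x − t/√3)/(√3·x²). Then a₋, b₋ satisfy the linearized system: ∂/∂t (x²·a₋(t,x)) + ∂/∂x (x²·b₋(t,x)) = 0 and ∂/∂t (x²·b₋(t,x)) + ∂/∂x ((x²/3)·a₋(t,x)) = (2x/3)·a₋(t,x) for all t > 0, x > 0; moreover a₋(t,x) → f₀(x)/x and b₋(t,x) → f₀(x)/(√3·x) − F₀(x)/(√3·x²) as t ↓ 0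 for each x > 0. -/
open Filter

/-- The incoming-wave ansatz `a₋(t,x) = f₀(x − t/√3)/x`,
`b₋(t,x) = f₀(x − t/√3)/(√3 x) − F₀(x − t/√3)/(√3 x²)` with `f₀ = F₀'` and `F₀ ∈ C²`
solves the linearized radially symmetric system and attains the stated initial values
as `t ↓ 0`. -/
theorem stmt_14 (F₀ f₀ : ℝ → ℝ) (hF₀ : ContDiff ℝ 2 F₀) (hf₀ : f₀ = deriv F₀)
    (aM bM : ℝ → ℝ → ℝ)
    (haM : ∀ t x, aM t x = f₀ (x - t / Real.sqrt 3) / x)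
    (hbM : ∀ t x, bM t x = f₀ (x - t / Real.sqrt 3) / (Real.sqrt 3 * x)
      - F₀ (x - t / Real.sqrt 3) / (Real.sqrt 3 * x ^ 2)) :
    (∀ t > (0 : ℝ), ∀ x > (0 : ℝ),
      deriv (fun s => x ^ 2 * aM s x) t + deriv (fun y => y ^ 2 * bM t y) x = 0 ∧
      deriv (fun s => x ^ 2 * bM s x) t + deriv (fun y => y ^ 2 / 3 * aM t y) x
        = 2 * x / 3 * aM t x) ∧
    (∀ x > (0 : ℝ),
      Tendsto (fun t => aM t x) (nhdsWithin 0 (Set.Ioi 0)) (nhds (f₀ x / x)) ∧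
      Tendsto (fun t => bM t x) (nhdsWithin 0 (Set.Ioi 0))
        (nhds (f₀ x / (Real.sqrt 3 * x) - F₀ x / (Real.sqrt 3 * x ^ 2)))) := by
  have h3 : Real.sqrt 3 ≠ 0 := by positivity
  have h33 : Real.sqrt 3 ^ 2 = 3 := Real.sq_sqrt (by norm_num)
  have hF : ∀ u, HasDerivAt F₀ (f₀ u) u := by
    intro u
    rw [hf₀]
    exact (hF₀.differentiable (by norm_num) u).hasDerivAt
  have hfd : Differentiable ℝ f₀ := by
    rw [hf₀]
    have h : ContDiff ℝ (1 + 1) F₀ := by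
      convert hF₀ using 1
      norm_num
    exact (contDiff_succ_iff_deriv.1 h).2.2.differentiable (by norm_num)
  have hf : ∀ u, HasDerivAt f₀ (deriv f₀ u) u := fun u => (hfd u).hasDerivAt
  have hFc : Continuous F₀ := hF₀.continuous
  have hfc : Continuous f₀ := hfd.continuous
  constructor
  · intro t _ x hx
    have hx0 : x ≠ 0 := ne_of_gt hx
    have ht : HasDerivAt (fun s : ℝ => x - s / Real.sqrt 3) (-(1 / Real.sqrt 3)) t :=
      ((hasDerivAt_id t).div_const _).const_sub x
    have hy : HasDerivAt (fun y : ℝ => y - t / Real.sqrt 3) 1 x :=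
      (hasDerivAt_id x).sub_const _
    have hft := HasDerivAt.comp t (hf (x - t / Real.sqrt 3)) ht
    have hFt := HasDerivAt.comp t (hF (x - t / Real.sqrt 3)) ht
    have hfy := HasDerivAt.comp x (hf (x - t / Real.sqrt 3)) hy
    have hFy := HasDerivAt.comp x (hF (x - t / Real.sqrt 3)) hy
    have hne : ∀ᶠ y in nhds x, y ≠ 0 := eventually_ne_nhds hx0
    have d1 := hft.const_mul x
    have d2 := (((hasDerivAt_id x).mul hfy).sub hFy).div_const (Real.sqrt 3)
    have d3 := ((hft.const_mul x).sub hFt).div_const (Real.sqrt 3)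
    have d4 := ((hasDerivAt_id x).mul hfy).div_const 3
    have e1 := d1.congr_of_eventuallyEq (f₁ := fun s => x ^ 2 * aM s x)
      (Eventually.of_forall fun s => by
        simp only [haM, Function.comp]; field_simp)
    have e2 := d2.congr_of_eventuallyEq (f₁ := fun y => y ^ 2 * bM t y)
      (hne.mono fun y hy => by
        simp only [hbM, Function.comp, Pi.mul_apply, Pi.sub_apply, id]; field_simp)
    have e3 := d3.congr_of_eventuallyEq (f₁ := fun s => x ^ 2 * bM s x)
      (Eventually.of_forall fun s => by
        simp only [hbM, Function.comp, Pi.sub_apply]; field_simp)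
    have e4 := d4.congr_of_eventuallyEq (f₁ := fun y => y ^ 2 / 3 * aM t y)
      (hne.mono fun y hy => by
        simp only [haM, Function.comp, Pi.mul_apply, id]; field_simp)
    rw [e1.deriv, e2.deriv, e3.deriv, e4.deriv, haM]
    simp only [Function.comp, id]
    generalize deriv f₀ (x - t / Real.sqrt 3) = p
    generalize f₀ (x - t / Real.sqrt 3) = q
    constructor
    · field_simp
      ring
    · field_simp
      rw [h33]
      ring
  · intro x hx
    have ha : Continuous (fun t => aM t x) := by
      simp only [haM]; fun_prop
    have hb : Continuous (fun t => bM t x) := by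
      simp only [hbM]; fun_prop
    constructor
    · have := (ha.tendsto 0).mono_left (nhdsWithin_le_nhds (s := Set.Ioi 0))
      simpa [haM] using this
    · have := (hb.tendsto 0).mono_left (nhdsWithin_le_nhds (s := Set.Ioi 0))
      simpa only [hbM, zero_div, sub_zero] using this
end

section
/- Let a₀, b₀ : ℝ → ℝ be C¹ functions with a₀ even and b₀ odd, and define A₀(x) = ∫₀ˣ u·a₀(u) du, B₀(x) = ∫₀ˣ b₀(u) du. With s₊ = x + t/√3, s₋ = x − t/√3, define for t > 0, x > 0: a(t,x) = (1/(2x))·[s₊·a₀(s₊) + s₋·a₀(s₋)] − (√3/(2x))·[s₊·b₀(s₊) + B₀(s₊)] + (√3/(2x))·[s₋·b₀(s₋) + B₀(s₋)], and b(t,x) = −(1/(2√3·x))·[s₊·a₀(s₊) − A₀(s₊)/x] + (1/(2√3·x))·[s₋·a₀(s₋) − A₀(s₋)/x] + (1/(2x))·[s₊·b₀(s₊) − (t/(√3·x))·B₀(s₊)] + (1/(2x))·[s₋·b₀(s₋) + (t/(√3·x))·B₀(s₋)]. Then a, b satisfy the linearized system ∂/∂t (x²·a) + ∂/∂x (x²·b)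 = 0 and ∂/∂t (x²·b) + ∂/∂x ((x²/3)·a) = (2x/3)·a for all t > 0, x > 0, and for each x > 0 one has a(t,x) → a₀(x) and b(t,x) → b₀(x) as t ↓ 0. -/
open Filter

theorem aux_tp {F : ℝ → ℝ} {d r x t : ℝ} (h : HasDerivAt F d (x + t / r)) :
    HasDerivAt (fun s => F (x + s / r)) (d * (1 / r)) t :=
  HasDerivAt.comp t h (((hasDerivAt_id t).div_const r).const_add x)

theorem aux_tm {F : ℝ → ℝ} {d r x t : ℝ} (h : HasDerivAt F d (x - t / r)) :
    HasDerivAt (fun s => F (x - s / r)) (d * (-(1 / r))) t :=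
  HasDerivAt.comp t h (((hasDerivAt_id t).div_const r).const_sub x)

theorem aux_xp {F : ℝ → ℝ} {d r x t : ℝ} (h : HasDerivAt F d (x + t / r)) :
    HasDerivAt (fun y => F (y + t / r)) d x := by
  exact h.comp_add_const x (t / r)

theorem aux_xm {F : ℝ → ℝ} {d r x t : ℝ} (h : HasDerivAt F d (x - t / r)) :
    HasDerivAt (fun y => F (y - t / r)) d x := by
  exact h.comp_sub_const x (t / r)

/-- Theorem 3.1: the explicit formulas built from even/odd `C¹` data `a₀, b₀` and their
primitives `A₀(x) = ∫₀ˣ u a₀(u) du`, `B₀(x) = ∫₀ˣ b₀(u) du` solve the linearized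
radially symmetric system on the quarter plane `t > 0, x > 0` and attain the initial
data `a₀, b₀` as `t ↓ 0`. -/
theorem stmt_15 (a₀ b₀ : ℝ → ℝ) (ha₀ : ContDiff ℝ 1 a₀) (hb₀ : ContDiff ℝ 1 b₀)
    (heven : ∀ x, a₀ (-x) = a₀ x) (hodd : ∀ x, b₀ (-x) = -b₀ x)
    (A₀ B₀ : ℝ → ℝ)
    (hA₀ : ∀ x, A₀ x = ∫ u in (0 : ℝ)..x, u * a₀ u)
    (hB₀ : ∀ x, B₀ x = ∫ u in (0 : ℝ)..x, b₀ u)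
    (a b : ℝ → ℝ → ℝ)
    (ha : ∀ t x, a t x =
      1 / (2 * x) * ((x + t / Real.sqrt 3) * a₀ (x + t / Real.sqrt 3)
        + (x - t / Real.sqrt 3) * a₀ (x - t / Real.sqrt 3))
      - Real.sqrt 3 / (2 * x) * ((x + t / Real.sqrt 3) * b₀ (x + t / Real.sqrt 3)
        + B₀ (x + t / Real.sqrt 3))
      + Real.sqrt 3 / (2 * x) * ((x - t / Real.sqrt 3) * b₀ (x - t / Real.sqrt 3)
        + B₀ (x - t / Real.sqrt 3)))
    (hb : ∀ t x, b t x =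
      -(1 / (2 * Real.sqrt 3 * x)) * ((x + t / Real.sqrt 3) * a₀ (x + t / Real.sqrt 3)
        - A₀ (x + t / Real.sqrt 3) / x)
      + 1 / (2 * Real.sqrt 3 * x) * ((x - t / Real.sqrt 3) * a₀ (x - t / Real.sqrt 3)
        - A₀ (x - t / Real.sqrt 3) / x)
      + 1 / (2 * x) * ((x + t / Real.sqrt 3) * b₀ (x + t / Real.sqrt 3)
        - t / (Real.sqrt 3 * x) * B₀ (x + t / Real.sqrt 3))
      + 1 / (2 * x) * ((x - t / Real.sqrt 3) * b₀ (x - t / Real.sqrt 3)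
        + t / (Real.sqrt 3 * x) * B₀ (x - t / Real.sqrt 3))) :
    (∀ t > (0 : ℝ), ∀ x > (0 : ℝ),
      deriv (fun s => x ^ 2 * a s x) t + deriv (fun y => y ^ 2 * b t y) x = 0 ∧
      deriv (fun s => x ^ 2 * b s x) t + deriv (fun y => y ^ 2 / 3 * a t y) x
        = 2 * x / 3 * a t x) ∧
    (∀ x > (0 : ℝ),
      Tendsto (fun t => a t x) (nhdsWithin 0 (Set.Ioi 0)) (nhds (a₀ x)) ∧
      Tendsto (fun t => b t x) (nhdsWithin 0 (Set.Ioi 0)) (nhds (b₀ x))) := by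
  have hr0 : Real.sqrt 3 ≠ 0 := by positivity
  have hr2 : Real.sqrt 3 ^ 2 = 3 := Real.sq_sqrt (by norm_num)
  generalize Real.sqrt 3 = r at *
  have ca := ha₀.continuous
  have cb := hb₀.continuous
  have da : ∀ y, HasDerivAt a₀ (deriv a₀ y) y := fun y =>
    (ha₀.differentiable (by norm_num) y).hasDerivAt
  have db : ∀ y, HasDerivAt b₀ (deriv b₀ y) y := fun y =>
    (hb₀.differentiable (by norm_num) y).hasDerivAt
  have dA : ∀ y, HasDerivAt A₀ (y * a₀ y) y := by
    intro y
    rw [funext hA₀]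
    have hc : Continuous (fun u => u * a₀ u) := by fun_prop
    exact hc.integral_hasStrictDerivAt 0 y |>.hasDerivAt
  have dB : ∀ y, HasDerivAt B₀ (b₀ y) y := by
    intro y
    rw [funext hB₀]
    exact cb.integral_hasStrictDerivAt 0 y |>.hasDerivAt
  have dF : ∀ y, HasDerivAt (fun u => u * a₀ u) (1 * a₀ y + y * deriv a₀ y) y := fun y =>
    (hasDerivAt_id y).mul (da y)
  have dG : ∀ y, HasDerivAt (fun u => u * b₀ u) (1 * b₀ y + y * deriv b₀ y) y := fun y =>
    (hasDerivAt_id y).mul (db y)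
  have cA : Continuous A₀ := continuous_iff_continuousAt.2 fun y => (dA y).continuousAt
  have cB : Continuous B₀ := continuous_iff_continuousAt.2 fun y => (dB y).continuousAt
  refine ⟨?_, ?_⟩
  · intro t ht x hx
    have hx0 : x ≠ 0 := hx.ne'
    have ea : ∀ s y, y ≠ 0 → y ^ 2 * a s y = y / 2 *
        (((y + s / r) * a₀ (y + s / r) + (y - s / r) * a₀ (y - s / r))
        - r * (((y + s / r) * b₀ (y + s / r) + B₀ (y + s / r))
          - ((y - s / r) * b₀ (y - s / r) + B₀ (y - s / r)))) := by
      intro s y hy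
      rw [ha]
      generalize y + s / r = p
      generalize y - s / r = q
      field_simp
      ring
    have eb : ∀ s y, y ≠ 0 → y ^ 2 * b s y = 1 / (2 * r) *
        (y * ((y - s / r) * a₀ (y - s / r) - (y + s / r) * a₀ (y + s / r))
          + (A₀ (y + s / r) - A₀ (y - s / r)))
        + (1 / 2) * (y * ((y + s / r) * b₀ (y + s / r) + (y - s / r) * b₀ (y - s / r))
          - s * (1 / r) * (B₀ (y + s / r) - B₀ (y - s / r))) := by
      intro s y hy
      rw [hb]
      generalize y + s / r = p
      generalize y - s / r = q
      field_simp
      ring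
    have nx : ∀ᶠ y in nhds x, y ≠ 0 := isOpen_ne.mem_nhds hx0
    have tA := (((aux_tp (dF (x + t / r))).add (aux_tm (dF (x - t / r)))).sub
      ((((aux_tp (dG (x + t / r))).add (aux_tp (dB (x + t / r)))).sub
        ((aux_tm (dG (x - t / r))).add (aux_tm (dB (x - t / r))))).const_mul r)).const_mul (x / 2)
    have xA := ((hasDerivAt_id x).div_const 2).mul
      (((aux_xp (dF (x + t / r))).add (aux_xm (dF (x - t / r)))).sub
      ((((aux_xp (dG (x + t / r))).add (aux_xp (dB (x + t / r)))).sub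
        ((aux_xm (dG (x - t / r))).add (aux_xm (dB (x - t / r))))).const_mul r))
    have tB := (((((aux_tm (dF (x - t / r))).sub (aux_tp (dF (x + t / r)))).const_mul x).add
        ((aux_tp (dA (x + t / r))).sub (aux_tm (dA (x - t / r))))).const_mul (1 / (2 * r))).add
      (((((aux_tp (dG (x + t / r))).add (aux_tm (dG (x - t / r)))).const_mul x).sub
        (((hasDerivAt_id t).mul_const (1 / r)).mul
          ((aux_tp (dB (x + t / r))).sub (aux_tm (dB (x - t / r)))))).const_mul (1 / 2))
    have xB := ((((hasDerivAt_id x).mul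
          ((aux_xm (dF (x - t / r))).sub (aux_xp (dF (x + t / r))))).add
        ((aux_xp (dA (x + t / r))).sub (aux_xm (dA (x - t / r))))).const_mul (1 / (2 * r))).add
      ((((hasDerivAt_id x).mul ((aux_xp (dG (x + t / r))).add (aux_xm (dG (x - t / r))))).sub
        (((aux_xp (dB (x + t / r))).sub (aux_xm (dB (x - t / r)))).const_mul
          (t * (1 / r)))).const_mul (1 / 2))
    have tA' := tA.congr_of_eventuallyEq (f₁ := fun s => x ^ 2 * a s x)
      (Eventually.of_forall fun s => by simpa using ea s x hx0)
    have tB' := tB.congr_of_eventuallyEq (f₁ := fun s => x ^ 2 * b s x)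
      (Eventually.of_forall fun s => by simpa using eb s x hx0)
    have xA' := (xA.congr_of_eventuallyEq (f₁ := fun y => y ^ 2 * a t y)
      (nx.mono fun y hy => by simpa using ea t y hy)).div_const 3
    have xB' := xB.congr_of_eventuallyEq (f₁ := fun y => y ^ 2 * b t y)
      (nx.mono fun y hy => by simpa using eb t y hy)
    have e3 : (fun y => y ^ 2 / 3 * a t y) = fun y => y ^ 2 * a t y / 3 := by
      funext y; ring
    have hi : r * (1 / r) = 1 := by field_simp
    have hi2 : 1 / (2 * r) = (1 / 2) * (1 / r) := by field_simp
    have hi3 : (1 / r) ^ 2 = 1 / 3 := by rw [div_pow, hr2]; norm_num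
    have hri : r = 3 * (1 / r) := by field_simp; exact hr2
    rw [e3, tA'.deriv, xB'.deriv, tB'.deriv, xA'.deriv]
    have ra : 2 * x / 3 * a t x = 2 / (3 * x) * (x ^ 2 * a t x) := by field_simp
    rw [ra, ea t x hx0]
    have hp : x + t / r = x + t * (1 / r) := by ring
    have hq : x - t / r = x - t * (1 / r) := by ring
    have e4 : ∀ z, 2 / (3 * x) * (x / 2 * z) = z / 3 := by intro z; field_simp
    rw [e4]
    simp only [id, Pi.add_apply, Pi.sub_apply, hi2]
    rw [hp, hq]
    generalize hk : 1 / r = k at *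
    subst hri
    generalize hP : a₀ (x + t * k) = a1
    generalize a₀ (x - t * k) = a2
    generalize b₀ (x + t * k) = b1
    generalize b₀ (x - t * k) = b2
    generalize B₀ (x + t * k) = B1
    generalize B₀ (x - t * k) = B2
    generalize deriv a₀ (x + t * k) = a1'
    generalize deriv a₀ (x - t * k) = a2'
    generalize deriv b₀ (x + t * k) = b1'
    generalize deriv b₀ (x - t * k) = b2'
    constructor
    · linear_combination (-(x / 2) * 3 * (2 * b1 + (x + t * k) * b1' + 2 * b2
        + (x - t * k) * b2')) * hi3
    · linear_combination (1 / 2 * (-x * (a1 + (x + t * k) * a1' + a2 + (x - t * k) * a2')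
        + (x + t * k) * a1 + (x - t * k) * a2)) * hi3
  · intro x hx
    have hx0 : x ≠ 0 := ne_of_gt hx
    constructor
    · have h : Continuous fun t => a t x := by
        simp only [ha]; fun_prop
      have h0 : a 0 x = a₀ x := by
        rw [ha]; simp; field_simp; ring
      have := (h.tendsto 0).mono_left (nhdsWithin_le_nhds (s := Set.Ioi 0))
      rwa [h0] at this
    · have h : Continuous fun t => b t x := by
        simp only [hb]; fun_prop
      have h0 : b 0 x = b₀ x := by
        rw [hb]; simp; field_simp; ring
      have := (h.tendsto 0).mono_left (nhdsWithin_le_nhds (s := Set.Ioi 0))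
      rwa [h0] at this
end

section
/- Let a₀, b₀ : ℝ → ℝ be C² functions with a₀ even and b₀ odd, and let b(t,x) be given by the explicit solution formula of the linearized radially symmetric system with data a₀, b₀. Then for every t > 0, b(t,x) tends to 0 as x ↓ 0. -/
open Filter

lemma aux_lim (F k : ℝ → ℝ) (h0 : F 0 = 0) (hF : ∀ x, HasDerivAt F (x * k x) x)
    (hk : Continuous k) (hk0 : k 0 = 0) :
    Tendsto (fun x => F x / x ^ 2) (nhdsWithin 0 (Set.Ioi 0)) (nhds 0) := by
  refine HasDerivAt.lhopital_zero_nhdsGT (f' := fun x => x * k x) (g' := fun x => 2 * x)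
    (Eventually.of_forall hF) (Eventually.of_forall fun x => ?_) ?_ ?_ ?_ ?_
  · simpa using hasDerivAt_pow 2 x
  · filter_upwards [self_mem_nhdsWithin] with x hx
    have : (0 : ℝ) < x := hx
    positivity
  · have := (hF 0).continuousAt.tendsto
    rw [h0] at this
    exact this.mono_left nhdsWithin_le_nhds
  · have : Continuous fun x : ℝ => x ^ 2 := by fun_prop
    have := this.tendsto 0
    simp only [ne_eq, OfNat.ofNat_ne_zero, not_false_eq_true, zero_pow] at this
    exact this.mono_left nhdsWithin_le_nhds
  · have h : Tendsto (fun x => k x / 2) (nhdsWithin 0 (Set.Ioi 0)) (nhds 0) := by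
      have := (hk.div_const 2).tendsto 0
      rw [hk0, zero_div] at this
      exact this.mono_left nhdsWithin_le_nhds
    refine h.congr' ?_
    filter_upwards [self_mem_nhdsWithin] with x hx
    have : x ≠ 0 := ne_of_gt hx
    field_simp

lemma aux_even (f G : ℝ → ℝ) (hodd : ∀ x, f (-x) = -f x)
    (hG : ∀ x, G x = ∫ u in (0 : ℝ)..x, f u) (x : ℝ) : G (-x) = G x := by
  have h := intervalIntegral.integral_comp_neg (a := 0) (b := x) f
  simp only [hodd, intervalIntegral.integral_neg, neg_zero] at h
  rw [intervalIntegral.integral_symm 0 (-x)] at h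
  rw [hG, hG]
  linarith

lemma aux_deriv (f G : ℝ → ℝ) (hf : Continuous f)
    (hG : ∀ x, G x = ∫ u in (0 : ℝ)..x, f u) (x : ℝ) : HasDerivAt G (f x) x := by
  rw [funext hG]
  exact (hf.integral_hasStrictDerivAt 0 x).hasDerivAt

/-- Theorem 3.3: for even/odd `C²` data `a₀, b₀`, the explicit solution component
`b(t,x)` of the linearized radially symmetric system satisfies `b(t,x) → 0` as `x ↓ 0`,
for every `t > 0`. -/
theorem stmt_16 (a₀ b₀ : ℝ → ℝ) (ha₀ : ContDiff ℝ 2 a₀) (hb₀ : ContDiff ℝ 2 b₀)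
    (heven : ∀ x, a₀ (-x) = a₀ x) (hodd : ∀ x, b₀ (-x) = -b₀ x)
    (A₀ B₀ : ℝ → ℝ)
    (hA₀ : ∀ x, A₀ x = ∫ u in (0 : ℝ)..x, u * a₀ u)
    (hB₀ : ∀ x, B₀ x = ∫ u in (0 : ℝ)..x, b₀ u)
    (b : ℝ → ℝ → ℝ)
    (hb : ∀ t x, b t x =
      -(1 / (2 * Real.sqrt 3 * x)) * ((x + t / Real.sqrt 3) * a₀ (x + t / Real.sqrt 3)
        - A₀ (x + t / Real.sqrt 3) / x)
      + 1 / (2 * Real.sqrt 3 * x) * ((x - t / Real.sqrt 3) * a₀ (x - t / Real.sqrt 3)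
        - A₀ (x - t / Real.sqrt 3) / x)
      + 1 / (2 * x) * ((x + t / Real.sqrt 3) * b₀ (x + t / Real.sqrt 3)
        - t / (Real.sqrt 3 * x) * B₀ (x + t / Real.sqrt 3))
      + 1 / (2 * x) * ((x - t / Real.sqrt 3) * b₀ (x - t / Real.sqrt 3)
        + t / (Real.sqrt 3 * x) * B₀ (x - t / Real.sqrt 3))) :
    ∀ t > (0 : ℝ), Tendsto (fun x => b t x) (nhdsWithin 0 (Set.Ioi 0)) (nhds 0) := by
  intro t _
  have hs : Real.sqrt 3 ≠ 0 := by positivity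
  set c := t / Real.sqrt 3 with hc
  have ca := ha₀.continuous
  have cb := hb₀.continuous
  have cda : Continuous (deriv a₀) := ha₀.continuous_deriv (by norm_num)
  have cdb : Continuous (deriv b₀) := hb₀.continuous_deriv (by norm_num)
  have da : ∀ x, HasDerivAt a₀ (deriv a₀ x) x := fun x =>
    (ha₀.differentiable (by norm_num) x).hasDerivAt
  have db : ∀ x, HasDerivAt b₀ (deriv b₀ x) x := fun x =>
    (hb₀.differentiable (by norm_num) x).hasDerivAt
  have oa : ∀ x, deriv a₀ (-x) = - deriv a₀ x := fun x => by
    have h := deriv_comp_neg a₀ x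
    simp only [heven] at h
    linarith
  have ob : ∀ x, deriv b₀ (-x) = deriv b₀ x := fun x => by
    have h := deriv_comp_neg b₀ x
    simp only [hodd, deriv.fun_neg] at h
    linarith
  have eA := aux_even (fun u => u * a₀ u) A₀ (fun x => by simp [heven]) hA₀
  have eB := aux_even b₀ B₀ hodd hB₀
  have dA := aux_deriv (fun u => u * a₀ u) A₀ (by fun_prop) hA₀
  have dB := aux_deriv b₀ B₀ cb hB₀
  have sp : ∀ x : ℝ, HasDerivAt (fun x => x + c) 1 x := fun x => (hasDerivAt_id x).add_const c
  have sm : ∀ x : ℝ, HasDerivAt (fun x => x - c) 1 x := fun x => (hasDerivAt_id x).sub_const c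
  have cp : ∀ (f f' : ℝ → ℝ), (∀ x, HasDerivAt f (f' x) x) →
      ∀ x, HasDerivAt (fun x => f (x + c)) (f' (x + c)) x := fun f f' h x =>
    (h (x + c)).comp_add_const x c
  have cm : ∀ (f f' : ℝ → ℝ), (∀ x, HasDerivAt f (f' x) x) →
      ∀ x, HasDerivAt (fun x => f (x - c)) (f' (x - c)) x := fun f f' h x =>
    (h (x - c)).comp_sub_const x c
  have hN := aux_lim
    (fun x => x * ((x + c) * a₀ (x + c) - (x - c) * a₀ (x - c)) - (A₀ (x + c) - A₀ (x - c)))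
    (fun x => (a₀ (x + c) + (x + c) * deriv a₀ (x + c))
      - (a₀ (x - c) + (x - c) * deriv a₀ (x - c)))
    (by simp [eA])
    (fun x => by
      have := ((hasDerivAt_id' x).mul (((sp x).mul (cp _ _ da x)).sub
        ((sm x).mul (cm _ _ da x)))).sub ((cp _ _ dA x).sub (cm _ _ dA x))
      refine this.congr_deriv ?_
      simp only [Pi.mul_apply, Pi.sub_apply]
      ring)
    (by fun_prop) (by simp [heven, oa])
  have hM := aux_lim
    (fun x => x * ((x + c) * b₀ (x + c) + (x - c) * b₀ (x - c)) - c * (B₀ (x + c) - B₀ (x - c)))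
    (fun x => b₀ (x + c) + b₀ (x - c) + (b₀ (x + c) + (x + c) * deriv b₀ (x + c))
      + (b₀ (x - c) + (x - c) * deriv b₀ (x - c)))
    (by simp [eB])
    (fun x => by
      have := ((hasDerivAt_id' x).mul (((sp x).mul (cp _ _ db x)).add
        ((sm x).mul (cm _ _ db x)))).sub (((cp _ _ dB x).sub (cm _ _ dB x)).const_mul c)
      refine this.congr_deriv ?_
      simp only [Pi.mul_apply, Pi.add_apply]
      ring)
    (by fun_prop) (by simp only [zero_add, zero_sub, hodd, ob]; ring)
  have key := (hN.const_mul (-(1 / (2 * Real.sqrt 3)))).add (hM.const_mul (1 / 2))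
  simp only [mul_zero, add_zero] at key
  refine key.congr' ?_
  filter_upwards [self_mem_nhdsWithin] with x hx
  have hx : x ≠ 0 := ne_of_gt hx
  have e : t / (Real.sqrt 3 * x) = c / x := by rw [hc, div_div]
  rw [hb, e, ← hc]
  clear_value c
  field_simp
  ring
end

section
/- Define a(t,x) = 3/2 + t/(2√3·x) and b(t,x) = (t² − 3(1+x²))/(12√3·x²) for t > 0, x > 0. Then a, b satisfy the linearized radially symmetric system at every point (t,x) with t > 0, x > 0: ∂/∂t (x²·a(t,x)) + ∂/∂x (x²·b(t,x)) = 0 and ∂/∂t (x²·b(t,x)) + ∂/∂x ((x²/3)·a(t,x)) = (2x/3)·a(t,x). -/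
/-- The fields `a(t,x) = 3/2 + t/(2√3 x)` and `b(t,x) = (t² − 3(1+x²))/(12√3 x²)` of the
region `Ω₂` in the imploding-shock example satisfy the linearized radially symmetric
system at every point `(t,x)` with `t > 0`, `x > 0`. -/
theorem stmt_17 (a b : ℝ → ℝ → ℝ)
    (ha : ∀ t x, a t x = 3 / 2 + t / (2 * Real.sqrt 3 * x))
    (hb : ∀ t x, b t x = (t ^ 2 - 3 * (1 + x ^ 2)) / (12 * Real.sqrt 3 * x ^ 2)) :
    ∀ t > (0 : ℝ), ∀ x > (0 : ℝ),
      deriv (fun s => x ^ 2 * a s x) t + deriv (fun y => y ^ 2 * b t y) x = 0 ∧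
      deriv (fun s => x ^ 2 * b s x) t + deriv (fun y => y ^ 2 / 3 * a t y) x
        = 2 * x / 3 * a t x := by
  intro t _ x hx
  have hr : Real.sqrt 3 ≠ 0 := by positivity
  have hx0 : x ≠ 0 := hx.ne'
  simp only [ha, hb]
  generalize Real.sqrt 3 = r at hr
  have h1 : HasDerivAt (fun s : ℝ => x ^ 2 * (3 / 2 + s / (2 * r * x))) (x / (2 * r)) t := by
    refine ((((hasDerivAt_id' t).div_const (2 * r * x)).const_add (3 / 2)).const_mul
      (x ^ 2)).congr_deriv ?_
    field_simp
  have h2 : HasDerivAt (fun y : ℝ => y ^ 2 * ((t ^ 2 - 3 * (1 + y ^ 2)) / (12 * r * y ^ 2)))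
      (-x / (2 * r)) x := by
    have h : HasDerivAt (fun y : ℝ => (t ^ 2 - 3 * (1 + y ^ 2)) / (12 * r)) (-x / (2 * r)) x := by
      refine ((((((hasDerivAt_pow 2 x).const_add 1).const_mul 3).const_sub
        (t ^ 2)).div_const (12 * r))).congr_deriv ?_
      field_simp
      norm_num
      ring
    refine h.congr_of_eventuallyEq ?_
    filter_upwards [eventually_ne_nhds hx0] with y hy
    field_simp
  have h3 : HasDerivAt (fun s : ℝ => x ^ 2 * ((s ^ 2 - 3 * (1 + x ^ 2)) / (12 * r * x ^ 2)))
      (t / (6 * r)) t := by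
    refine ((((hasDerivAt_pow 2 t).sub_const (3 * (1 + x ^ 2))).div_const
      (12 * r * x ^ 2)).const_mul (x ^ 2)).congr_deriv ?_
    field_simp
    norm_num
    ring
  have h4 : HasDerivAt (fun y : ℝ => y ^ 2 / 3 * (3 / 2 + t / (2 * r * y)))
      (x + t / (6 * r)) x := by
    have h : HasDerivAt (fun y : ℝ => y ^ 2 / 2 + y * (t / (6 * r))) (x + t / (6 * r)) x := by
      refine (((hasDerivAt_pow 2 x).div_const 2).add
        ((hasDerivAt_id' x).mul_const (t / (6 * r)))).congr_deriv ?_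
      norm_num
    refine h.congr_of_eventuallyEq ?_
    filter_upwards [eventually_ne_nhds hx0] with y hy
    field_simp
    ring
  rw [h1.deriv, h2.deriv, h3.deriv, h4.deriv]
  constructor
  · ring
  · field_simp
    ring
end

section
/- Let p, u : ℝ² → ℝ and let (t,x) be a point with t > 0, x > 0 and p(t,x) > 0. Assume p and u are differentiable at (t,x) and satisfy at (t,x) the radially symmetric ultra-relativistic Euler equations: ∂/∂t (x²·p·(3+4u²)) + ∂/∂x (4·x²·p·u·√(1+u²)) = 0 and ∂/∂t (4·x²·p·u·√(1+u²)) + ∂/∂x (x²·p·(1+4u²)) = 2·x·p. Then the entropy conservation law also holds at (t,x): ∂/∂t (x²·p^{3/4}·√(1+u²)) + ∂/∂x (x²·p^{3/4}·u) = 0. -/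
/-- Remark 2.3(2): at any point of differentiability where the radially symmetric
ultra-relativistic Euler equations hold, the additional entropy conservation law
`∂ₜ(x² p^{3/4}√(1+u²)) + ∂ₓ(x² p^{3/4} u) = 0` also holds. -/
theorem stmt_19 (p u : ℝ × ℝ → ℝ) (t x : ℝ) (ht : 0 < t) (hx : 0 < x)
    (hp0 : 0 < p (t, x))
    (hpd : DifferentiableAt ℝ p (t, x)) (hud : DifferentiableAt ℝ u (t, x))
    (heq1 : deriv (fun s => x ^ 2 * p (s, x) * (3 + 4 * u (s, x) ^ 2)) t
      + deriv (fun y => 4 * y ^ 2 * p (t, y) * u (t, y) * Real.sqrt (1 + u (t, y) ^ 2)) x = 0)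
    (heq2 : deriv (fun s => 4 * x ^ 2 * p (s, x) * u (s, x) * Real.sqrt (1 + u (s, x) ^ 2)) t
      + deriv (fun y => y ^ 2 * p (t, y) * (1 + 4 * u (t, y) ^ 2)) x = 2 * x * p (t, x)) :
    deriv (fun s => x ^ 2 * p (s, x) ^ ((3 : ℝ) / 4) * Real.sqrt (1 + u (s, x) ^ 2)) t
      + deriv (fun y => y ^ 2 * p (t, y) ^ ((3 : ℝ) / 4) * u (t, y)) x = 0 := by
  obtain ⟨pt, hpt⟩ : ∃ a, HasDerivAt (fun s => p (s, x)) a t := by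
    have h : DifferentiableAt ℝ (fun s : ℝ => p (s, x)) t :=
      DifferentiableAt.comp t (f := fun s : ℝ => (s, x)) hpd (by fun_prop)
    exact ⟨_, h.hasDerivAt⟩
  obtain ⟨ut, hut⟩ : ∃ a, HasDerivAt (fun s => u (s, x)) a t := by
    have h : DifferentiableAt ℝ (fun s : ℝ => u (s, x)) t :=
      DifferentiableAt.comp t (f := fun s : ℝ => (s, x)) hud (by fun_prop)
    exact ⟨_, h.hasDerivAt⟩
  obtain ⟨px, hpx⟩ : ∃ a, HasDerivAt (fun y => p (t, y)) a x := by
    have h : DifferentiableAt ℝ (fun y : ℝ => p (t, y)) x :=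
      DifferentiableAt.comp x (f := fun y : ℝ => (t, y)) hpd (by fun_prop)
    exact ⟨_, h.hasDerivAt⟩
  obtain ⟨ux, hux⟩ : ∃ a, HasDerivAt (fun y => u (t, y)) a x := by
    have h : DifferentiableAt ℝ (fun y : ℝ => u (t, y)) x :=
      DifferentiableAt.comp x (f := fun y : ℝ => (t, y)) hud (by fun_prop)
    exact ⟨_, h.hasDerivAt⟩
  have hpos : 0 < 1 + u (t, x) ^ 2 := by positivity
  have hwt := ((hut.pow 2).const_add 1).sqrt hpos.ne'
  have hwx := ((hux.pow 2).const_add 1).sqrt hpos.ne'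
  have hqt := hpt.rpow_const (p := (3 : ℝ) / 4) (Or.inl hp0.ne')
  have hqx := hpx.rpow_const (p := (3 : ℝ) / 4) (Or.inl hp0.ne')
  have hy : HasDerivAt (fun y : ℝ => y ^ 2) (2 * x) x := by
    simpa using hasDerivAt_pow 2 x
  have e1 := ((hpt.const_mul (x ^ 2)).mul (((hut.pow 2).const_mul 4).const_add 3)).deriv
  have e2 := ((((hy.const_mul 4).mul hpx).mul hux).mul hwx).deriv
  have e3 := (((hpt.const_mul (4 * x ^ 2)).mul hut).mul hwt).deriv
  have e4 := ((hy.mul hpx).mul (((hux.pow 2).const_mul 4).const_add 1)).deriv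
  have e5 := ((hqt.const_mul (x ^ 2)).mul hwt).deriv
  have e6 := ((hy.mul hqx).mul hux).deriv
  simp only [Pi.mul_def, Pi.pow_def] at e1 e2 e3 e4 e5 e6
  rw [e1, e2] at heq1
  rw [e3, e4] at heq2
  rw [e5, e6]
  have hr : p (t, x) ^ ((3 : ℝ) / 4) = p (t, x) ^ ((3 : ℝ) / 4 - 1) * p (t, x) := by
    rw [← Real.rpow_add_one hp0.ne']; norm_num
  rw [hr]
  generalize p (t, x) ^ ((3 : ℝ) / 4 - 1) = r
  have hw2 := Real.sq_sqrt hpos.le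
  have hw0 := Real.sqrt_pos.2 hpos
  generalize Real.sqrt (1 + u (t, x) ^ 2) = w at *
  generalize u (t, x) = v at *
  generalize p (t, x) = P at *
  obtain ⟨z, hz⟩ : ∃ z, z = w⁻¹ := ⟨_, rfl⟩
  have hzw : z * w = 1 := by rw [hz]; exact inv_mul_cancel₀ hw0.ne'
  have hd : ∀ a : ℝ, a / (2 * w) = a * z / 2 := by
    intro a; rw [hz]; field_simp
  simp only [hd] at heq1 heq2 ⊢
  norm_num at heq1 heq2 ⊢
  have hzv : z * v ^ 2 = w - z := by
    linear_combination w * hzw - z * hw2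
  grind
end
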